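/- arXiv:1910.05022 — 2 statements merged into one kernel-verified Lean document; each statement's English description precedes it below -/
import Mathlib

section
/- The coefficient matrices of the sl(2) Knizhnik–Zamolodchikov connection satisfy the infinitesimal pure braid relations: with H = (ℂ²)^{⊗d} and Ω_{ij} = Σ_{ℓ=1}^{3} s_ℓ^{(i)} ∘ s_ℓ^{(j)} as below, the family B_{ij} = Ω_{ij} satisfies [Ω_{ij}, Ω_{ik} + Ω_{jk}] = 0 and [Ω_{ij} + Ω_{ik}, Ω_{jk}] = 0 for all 1 ≤ i < j < k ≤ d, and [Ω_{ij}, Ω_{kl}] = 0 whenever i, j, k, l are pairwise distinct. Consequently the Knizhnik–Zamolodchikov connection d − λ Σ_{i<j} Ω_{ij} d(w_i − w_j)/(w_i − w_j) is flat for every λ ∈ ℂ. -/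
/-- The Pauli matrices `σ₁, σ₂, σ₃`. -/
noncomputable def pauli : Fin 3 → Matrix (Fin 2) (Fin 2) ℂ
  | 0 => !![0, 1; 1, 0]
  | 1 => !![0, -Complex.I; Complex.I, 0]
  | 2 => !![1, 0; 0, -1]

/-- The spin operator `s_ℓ^{(a)}` on `H = (ℂ²)^{⊗d}` (realized concretely as the space of
functions `(Fin d → Fin 2) → ℂ`, with operators written as matrices): it acts as `(1/2)σ_ℓ`
on the `a`-th tensor factor and as the identity on all other factors. -/
noncomputable def spinOp (d : ℕ) (ℓ : Fin 3) (a : Fin d) :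
    Matrix (Fin d → Fin 2) (Fin d → Fin 2) ℂ :=
  Matrix.of fun x y =>
    (1 / 2 : ℂ) * pauli ℓ (x a) (y a) *
      ∏ b ∈ Finset.univ.erase a, (if x b = y b then 1 else 0)

/-- The Knizhnik–Zamolodchikov coefficient operator `Ω_{ij} = ∑_ℓ s_ℓ^{(i)} ∘ s_ℓ^{(j)}`. -/
noncomputable def omegaOp (d : ℕ) (i j : Fin d) :
    Matrix (Fin d → Fin 2) (Fin d → Fin 2) ℂ :=
  ∑ ℓ : Fin 3, spinOp d ℓ i * spinOp d ℓ j

/-- The total spin operator `L_ℓ = ∑_a s_ℓ^{(a)}`. -/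
noncomputable def totalSpin (d : ℕ) (ℓ : Fin 3) :
    Matrix (Fin d → Fin 2) (Fin d → Fin 2) ℂ :=
  ∑ a : Fin d, spinOp d ℓ a

/-- The total spin Casimir `L² = L₁² + L₂² + L₃²`. -/
noncomputable def totalSpinSq (d : ℕ) :
    Matrix (Fin d → Fin 2) (Fin d → Fin 2) ℂ :=
  ∑ ℓ : Fin 3, totalSpin d ℓ * totalSpin d ℓ

section KZGeneric

variable {A : Type*} [Ring A] [Algebra ℂ A]

attribute [local instance] LieRing.ofAssociativeRing

/-- The bracket relations make `∑ a_l b_l` commute with `a_m + b_m`. -/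
lemma kz_casimir_aux (a1 a2 a3 b1 b2 b3 : A) (c : ℂ)
    (h11 : a1 * b1 = b1 * a1)
    (h21 : a2 * b1 = b1 * a2)
    (h31 : a3 * b1 = b1 * a3) (h12 : a1 * b2 = b2 * a1) (h13 : a1 * b3 = b3 * a1)
    (ha12 : a1 * a2 - a2 * a1 = c • a3) (ha31 : a3 * a1 - a1 * a3 = c • a2)
    (hb12 : b1 * b2 - b2 * b1 = c • b3) (hb31 : b3 * b1 - b1 * b3 = c • b2) :
    Commute (a1 * b1 + a2 * b2 + a3 * b3) (a1 + b1) := by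
  rw [commute_iff_eq, ← sub_eq_zero]
  have e : (a1 * b1 + a2 * b2 + a3 * b3) * (a1 + b1) - (a1 + b1) * (a1 * b1 + a2 * b2 + a3 * b3)
      = (a3 * a1 - a1 * a3) * b3 - (a1 * a2 - a2 * a1) * b2
        + a3 * (b3 * b1 - b1 * b3) - a2 * (b1 * b2 - b2 * b1)
        - a1 * (a1 * b1 - b1 * a1) - a2 * (a1 * b2 - b2 * a1) - a3 * (a1 * b3 - b3 * a1)
        + (a1 * b1 - b1 * a1) * b1
        + (a2 * b1 - b1 * a2) * b2 + (a3 * b1 - b1 * a3) * b3 := by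
    noncomm_ring
  rw [e, ha31, ha12, hb12, hb31, h11, h21, h31, h12, h13]
  simp only [sub_self, mul_zero, zero_mul, smul_mul_assoc, mul_smul_comm]
  abel

/-- Commutation of the Gaudin Hamiltonians, and the connection form, from the
infinitesimal pure braid relations. -/
lemma kz_gaudin {d : ℕ} (Om : Fin d → Fin d → A)
    (hsymm : ∀ i j, i ≠ j → Om i j = Om j i)
    (h3 : ∀ i j k, i ≠ j → i ≠ k → j ≠ k → Commute (Om i j) (Om i k + Om j k))
    (h4 : ∀ i j k l : Fin d, i ≠ j → i ≠ k → i ≠ l → j ≠ k → j ≠ l → k ≠ l →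
      Commute (Om i j) (Om k l))
    (w : Fin d → ℂ) (hw : ∀ i j, i ≠ j → w i ≠ w j) (i j : Fin d) :
    Commute (∑ k, (w i - w k)⁻¹ • Om i k) (∑ l, (w j - w l)⁻¹ • Om j l) := by
  rcases eq_or_ne i j with rfl | hij
  · exact Commute.refl _
  set g : Fin d → Fin d → A := fun i k => (w i - w k)⁻¹ • Om i k with hg
  have g0 : ∀ i, g i i = 0 := by intro i; simp [hg]
  have ganti : ∀ i j, g i j = - g j i := by
    intro i j
    rcases eq_or_ne i j with rfl | h
    · simp [g0]
    · simp only [hg]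
      rw [hsymm i j h, ← neg_smul, ← inv_neg, neg_sub]
  have gc : ∀ i j, ⁅g i j, g j i⁆ = 0 := by
    intro i j; rw [ganti j i]; simp
  have hpt : ∀ k l, ⁅g i k, g j l⁆ = (if k = j then ⁅g i j, g j l⁆ else 0)
      + (if l = i then ⁅g i k, g j i⁆ else 0) + (if k = l then ⁅g i k, g j k⁆ else 0) := by
    intro k l
    by_cases hkj : k = j
    · subst hkj
      by_cases hli : l = i
      · subst hli; simp [gc, g0, hij.symm]
      · by_cases hkl : k = l
        · subst hkl; simp [g0, hij, hij.symm]
        · simp [hli, hkl]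
    · by_cases hli : l = i
      · subst hli
        by_cases hkl : k = l
        · subst hkl; simp [g0, hij, hij.symm]
        · simp [hkj, hkl]
      · by_cases hkl : k = l
        · subst hkl; simp [hkj, hli]
        · simp only [hkj, hli, hkl, if_false, add_zero]
          by_cases hik : i = k
          · subst hik; simp [g0]
          by_cases hjl : j = l
          · subst hjl; simp [g0]
          rw [← commute_iff_lie_eq]
          exact ((h4 i k j l hik hij (Ne.symm hli) hkj hkl hjl).smul_left _).smul_right _
  have hF : ∀ k, ⁅g i j, g j k⁆ + ⁅g i k, g j i⁆ + ⁅g i k, g j k⁆ = 0 := by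
    intro k
    by_cases hik : i = k
    · subst hik; simp [g0, gc]
    by_cases hjk : j = k
    · subst hjk; simp [g0, gc]
    have e1 := (commute_iff_lie_eq.1 (h3 i j k hij hik hjk))
    have e2 := (commute_iff_lie_eq.1 (h3 i k j hik hij (Ne.symm hjk)))
    rw [hsymm k j (Ne.symm hjk)] at e2
    rw [lie_add] at e1 e2
    rw [← lie_skew] at e2
    simp only [hg, smul_lie, lie_smul, smul_smul]
    rw [hsymm j i (Ne.symm hij), ← lie_skew (Om i k) (Om i j)]
    have e1' : ⁅Om i j, Om i k⁆ = - ⁅Om i j, Om j k⁆ := eq_neg_of_add_eq_zero_left e1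
    have e2' : ⁅Om i k, Om j k⁆ = - ⁅Om i j, Om j k⁆ := by
      rw [e1', neg_neg] at e2
      exact eq_neg_of_add_eq_zero_right e2
    rw [e1', e2']
    simp only [neg_neg, smul_neg, ← neg_smul, ← add_smul]
    have n1 : w i - w j ≠ 0 := sub_ne_zero.2 (hw _ _ hij)
    have n1' : w j - w i ≠ 0 := sub_ne_zero.2 (hw _ _ (Ne.symm hij))
    have n2 : w i - w k ≠ 0 := sub_ne_zero.2 (hw _ _ hik)
    have n3 : w j - w k ≠ 0 := sub_ne_zero.2 (hw _ _ hjk)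
    have hz : ∀ z : ℂ, z = 0 → z • ⁅Om i j, Om j k⁆ = 0 := by rintro _ rfl; simp
    apply hz
    rw [← neg_sub (w i) (w j), inv_neg]
    field_simp
    ring
  rw [commute_iff_lie_eq]
  change ⁅∑ k, g i k, ∑ l, g j l⁆ = 0
  have : ⁅∑ k, g i k, ∑ l, g j l⁆ = ∑ k, ∑ l, ⁅g i k, g j l⁆ := by
    exact sum_lie_sum _ _ _ _
  rw [this]
  rw [Finset.sum_congr rfl fun k _ => Finset.sum_congr rfl fun l _ => hpt k l]
  simp only [Finset.sum_add_distrib]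
  have s1 : ∑ k, ∑ l, (if k = j then ⁅g i j, g j l⁆ else 0) = ∑ l, ⁅g i j, g j l⁆ := by
    rw [Finset.sum_comm]; simp
  rw [s1]
  simp only [Finset.sum_ite_eq, Finset.sum_ite_eq', Finset.mem_univ, if_true]
  rw [← Finset.sum_add_distrib, ← Finset.sum_add_distrib]
  exact Finset.sum_eq_zero fun k _ => hF k

lemma kz_form {d : ℕ} (Om : Fin d → Fin d → A)
    (hsymm : ∀ i j, i ≠ j → Om i j = Om j i) (lam : ℂ) (w u : Fin d → ℂ) :
    (∑ p ∈ Finset.univ.filter (fun p : Fin d × Fin d => p.1 < p.2),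
            (((u p.1 - u p.2) / (w p.1 - w p.2)) • ((-lam) • Om p.1 p.2)))
      = ∑ i, (-lam * u i) • ∑ k, (w i - w k)⁻¹ • Om i k := by
  have hR : ∑ i, (-lam * u i) • ∑ k, (w i - w k)⁻¹ • Om i k
      = ∑ p : Fin d × Fin d, (-lam * u p.1 * (w p.1 - w p.2)⁻¹) • Om p.1 p.2 := by
    rw [Fintype.sum_prod_type]
    simp only [Finset.smul_sum, smul_smul]
  rw [hR, ← Finset.sum_filter_add_sum_filter_not Finset.univ
    (fun p : Fin d × Fin d => p.1 < p.2)]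
  have h2 : ∑ p ∈ Finset.univ.filter (fun p : Fin d × Fin d => ¬ p.1 < p.2),
        (-lam * u p.1 * (w p.1 - w p.2)⁻¹) • Om p.1 p.2
      = ∑ p ∈ Finset.univ.filter (fun p : Fin d × Fin d => p.1 < p.2),
        (-lam * u p.2 * (w p.2 - w p.1)⁻¹) • Om p.2 p.1 := by
    rw [Finset.sum_filter, Finset.sum_filter, ← (Equiv.prodComm (Fin d) (Fin d)).sum_comp]
    refine Finset.sum_congr rfl fun p _ => ?_
    rcases lt_trichotomy p.1 p.2 with h | h | h
    · simp [h, h.le]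
    · simp [h]
    · simp [h, h.le]
  rw [h2, ← Finset.sum_add_distrib]
  refine Finset.sum_congr rfl fun p hp => ?_
  have hlt : p.1 < p.2 := (Finset.mem_filter.1 hp).2
  rw [hsymm p.2 p.1 hlt.ne', smul_smul, ← add_smul]
  congr 1
  rw [← neg_sub (w p.1) (w p.2), inv_neg]
  ring

end KZGeneric

/-- The pure tensor `⨂ f b` as a matrix, as a monoid homomorphism. -/
noncomputable def kzTensor (d : ℕ) : (Fin d → Matrix (Fin 2) (Fin 2) ℂ) →*
    Matrix (Fin d → Fin 2) (Fin d → Fin 2) ℂ where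
  toFun f := Matrix.of fun x y => ∏ b, f b (x b) (y b)
  map_one' := by
    ext x y
    simp only [Matrix.of_apply, Pi.one_apply, Matrix.one_apply]
    by_cases h : x = y
    · subst h; simp
    · obtain ⟨b, hb⟩ := Function.ne_iff.1 h
      rw [if_neg h]
      exact Finset.prod_eq_zero (Finset.mem_univ b) (if_neg hb)
  map_mul' f g := by
    ext x y
    simp only [Matrix.of_apply, Pi.mul_apply, Matrix.mul_apply, ← Finset.prod_mul_distrib]
    rw [Finset.prod_univ_sum, Fintype.piFinset_univ]

lemma kz_spinOp_eq (d : ℕ) (l : Fin 3) (a : Fin d) :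
    spinOp d l a = kzTensor d (Pi.mulSingle a ((1 / 2 : ℂ) • pauli l)) := by
  ext x y
  simp only [spinOp, kzTensor, MonoidHom.coe_mk, OneHom.coe_mk, Matrix.of_apply]
  rw [← Finset.mul_prod_erase _ _ (Finset.mem_univ a)]
  congr 1
  · simp
  · refine Finset.prod_congr rfl fun b hb => ?_
    rw [Pi.mulSingle_eq_of_ne (Finset.ne_of_mem_erase hb), Matrix.one_apply]

lemma kz_site_apply (d : ℕ) (a : Fin d) (M : Matrix (Fin 2) (Fin 2) ℂ) (x y) :
    kzTensor d (Pi.mulSingle a M) x y = M (x a) (y a) *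
      ∏ b ∈ Finset.univ.erase a, (if x b = y b then (1 : ℂ) else 0) := by
  simp only [kzTensor, MonoidHom.coe_mk, OneHom.coe_mk, Matrix.of_apply]
  rw [← Finset.mul_prod_erase _ _ (Finset.mem_univ a)]
  congr 1
  · simp
  · refine Finset.prod_congr rfl fun b hb => ?_
    rw [Pi.mulSingle_eq_of_ne (Finset.ne_of_mem_erase hb), Matrix.one_apply]

lemma kz_spin_comm (d : ℕ) (l m : Fin 3) (a b : Fin d) (h : a ≠ b) :
    Commute (spinOp d l a) (spinOp d m b) := by
  rw [kz_spinOp_eq, kz_spinOp_eq]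
  exact (Pi.mulSingle_commute h _ _).map (kzTensor d)

lemma kz_spin_bracket (d : ℕ) (l m n : Fin 3) (a : Fin d)
    (h : pauli l * pauli m - pauli m * pauli l = (2 * Complex.I) • pauli n) :
    spinOp d l a * spinOp d m a - spinOp d m a * spinOp d l a = Complex.I • spinOp d n a := by
  simp only [kz_spinOp_eq, ← map_mul, ← Pi.mulSingle_mul]
  ext x y
  have h' := congrFun (congrFun h (x a)) (y a)
  simp only [Matrix.sub_apply, Matrix.smul_apply, smul_eq_mul] at h'
  simp only [Matrix.sub_apply, Matrix.smul_apply, kz_site_apply, smul_mul_assoc, mul_smul_comm,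
    smul_eq_mul]
  linear_combination (1 / 4 : ℂ) * (∏ b ∈ Finset.univ.erase a,
    (if x b = y b then (1 : ℂ) else 0)) * h'

lemma kz_pauli01 : pauli 0 * pauli 1 - pauli 1 * pauli 0 = (2 * Complex.I) • pauli 2 := by
  ext i j
  fin_cases i <;> fin_cases j <;> simp [pauli] <;> ring

lemma kz_pauli12 : pauli 1 * pauli 2 - pauli 2 * pauli 1 = (2 * Complex.I) • pauli 0 := by
  ext i j
  fin_cases i <;> fin_cases j <;> simp [pauli] <;> ring

lemma kz_pauli20 : pauli 2 * pauli 0 - pauli 0 * pauli 2 = (2 * Complex.I) • pauli 1 := by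
  ext i j
  fin_cases i <;> fin_cases j <;> simp [pauli] <;>
    ring_nf <;> simp

lemma kz_omega_symm (d : ℕ) (i j : Fin d) (h : i ≠ j) : omegaOp d i j = omegaOp d j i :=
  Finset.sum_congr rfl fun l _ => kz_spin_comm d l l i j h

lemma kz_omega_spin (d : ℕ) (i j : Fin d) (h : i ≠ j) (m : Fin 3) :
    Commute (omegaOp d i j) (spinOp d m i + spinOp d m j) := by
  have b01 := fun a => kz_spin_bracket d 0 1 2 a kz_pauli01
  have b12 := fun a => kz_spin_bracket d 1 2 0 a kz_pauli12
  have b20 := fun a => kz_spin_bracket d 2 0 1 a kz_pauli20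
  have hc := fun l m => (kz_spin_comm d l m i j h).eq
  unfold omegaOp
  rw [Fin.sum_univ_three]
  fin_cases m
  · exact kz_casimir_aux _ _ _ _ _ _ Complex.I (hc _ _) (hc _ _) (hc _ _) (hc _ _) (hc _ _)
      (b01 i) (b20 i) (b01 j) (b20 j)
  · have := kz_casimir_aux _ _ _ _ _ _ Complex.I (hc 1 1) (hc 2 1) (hc 0 1) (hc 1 2) (hc 1 0)
      (b12 i) (b01 i) (b12 j) (b01 j)
    rwa [add_comm, ← add_assoc] at this
  · have := kz_casimir_aux _ _ _ _ _ _ Complex.I (hc 2 2) (hc 0 2) (hc 1 2) (hc 2 0) (hc 2 1)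
      (b20 i) (b12 i) (b20 j) (b12 j)
    rwa [add_assoc, add_comm] at this

lemma kz_omega_comm_far (d : ℕ) (i j k : Fin d) (hik : i ≠ k) (hjk : j ≠ k) (m : Fin 3) :
    Commute (omegaOp d i j) (spinOp d m k) :=
  Commute.sum_left _ _ _ fun l _ =>
    (kz_spin_comm d l m i k hik).mul_left (kz_spin_comm d l m j k hjk)

lemma kz_omega3 (d : ℕ) (i j k : Fin d) (hij : i ≠ j) (hik : i ≠ k) (hjk : j ≠ k) :
    Commute (omegaOp d i j) (omegaOp d i k + omegaOp d j k) := by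
  have : omegaOp d i k + omegaOp d j k
      = ∑ m, (spinOp d m i + spinOp d m j) * spinOp d m k := by
    simp only [omegaOp, add_mul, Finset.sum_add_distrib]
  rw [this]
  exact Commute.sum_right _ _ _ fun m _ =>
    (kz_omega_spin d i j hij m).mul_right (kz_omega_comm_far d i j k hik hjk m)

lemma kz_omega4 (d : ℕ) (i j k l : Fin d) (hik : i ≠ k) (hil : i ≠ l)
    (hjk : j ≠ k) (hjl : j ≠ l) : Commute (omegaOp d i j) (omegaOp d k l) :=
  Commute.sum_right _ _ _ fun m _ =>
    (kz_omega_comm_far d i j k hik hjk m).mul_right (kz_omega_comm_far d i j l hil hjl m)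


/-- **KZ coefficient matrices satisfy the infinitesimal pure braid relations.**
With `Ω_{ij} = ∑_ℓ s_ℓ^{(i)} ∘ s_ℓ^{(j)}` on `(ℂ²)^{⊗d}`, the family `B_{ij} = Ω_{ij}`
satisfies `[Ω_{ij}, Ω_{ik} + Ω_{jk}] = 0` and `[Ω_{ij} + Ω_{ik}, Ω_{jk}] = 0` for `i < j < k`,
and `[Ω_{ij}, Ω_{kl}] = 0` for pairwise distinct indices.  Consequently the
Knizhnik–Zamolodchikov connection `d − λ ∑_{i<j} Ω_{ij} d(w_i − w_j)/(w_i − w_j)` is flat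
for every `λ ∈ ℂ` (pointwise commutation of its contracted coefficient matrices). -/
theorem kz_infinitesimal_pure_braid (d : ℕ) (hd : 1 ≤ d) :
    ((∀ i j k : Fin d, i < j → j < k →
        Commute (omegaOp d i j) (omegaOp d i k + omegaOp d j k) ∧
        Commute (omegaOp d i j + omegaOp d i k) (omegaOp d j k)) ∧
      (∀ i j k l : Fin d, i ≠ j → i ≠ k → i ≠ l → j ≠ k → j ≠ l → k ≠ l →
        Commute (omegaOp d i j) (omegaOp d k l))) ∧
    (∀ (lam : ℂ) (w : Fin d → ℂ), (∀ i j : Fin d, i ≠ j → w i ≠ w j) →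
      ∀ u v : Fin d → ℂ,
        Commute
          (∑ p ∈ Finset.univ.filter (fun p : Fin d × Fin d => p.1 < p.2),
            (((u p.1 - u p.2) / (w p.1 - w p.2)) • ((-lam) • omegaOp d p.1 p.2)))
          (∑ p ∈ Finset.univ.filter (fun p : Fin d × Fin d => p.1 < p.2),
            (((v p.1 - v p.2) / (w p.1 - w p.2)) • ((-lam) • omegaOp d p.1 p.2)))) := by
  refine ⟨⟨fun i j k hij hjk => ⟨?_, ?_⟩, ?_⟩, ?_⟩
  · exact kz_omega3 d i j k hij.ne (hij.trans hjk).ne hjk.ne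
  · rw [kz_omega_symm d i j hij.ne, kz_omega_symm d i k (hij.trans hjk).ne]
    exact (kz_omega3 d j k i hjk.ne hij.ne' (hij.trans hjk).ne').symm
  · intro i j k l _ hik hil hjk hjl _
    exact kz_omega4 d i j k l hik hil hjk hjl
  · intro lam w hw u v
    rw [kz_form (omegaOp d) (kz_omega_symm d), kz_form (omegaOp d) (kz_omega_symm d)]
    refine Commute.sum_left _ _ _ fun i _ => Commute.sum_right _ _ _ fun j _ => ?_
    refine Commute.smul_left (Commute.smul_right ?_ _) _
    exact kz_gaudin (omegaOp d) (kz_omega_symm d) (kz_omega3 d)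
      (fun i j k l _ hik hil hjk hjl _ => kz_omega4 d i j k l hik hil hjk hjl) w hw i j
end

section
/- Catalan-triangle dimension formula for the joint spin eigenspaces: let d ≥ 1, let k, r be integers with 0 ≤ 2k ≤ d and 0 ≤ r ≤ d − 2k, and set l = (d − 2k)/2 and m = l − r. Then the joint eigenspace V_{l,m} = { v ∈ (ℂ²)^{⊗d} : L² v = l(l+1) v and L₃ v = m v } has complex dimension C(d, k) − C(d, k−1), where C(d, −1) is interpreted as 0. In particular for k = 0 (i.e. l = d/2) each such eigenspace is one-dimensional. -/
/-- The joint eigenspace `V_{c₁,c₂} = { v : L² v = c₁ v ∧ L₃ v = c₂ v }` of the total-spin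
Casimir `L²` and of `L₃` on `(ℂ²)^{⊗d}`. -/
noncomputable def spinEigenspace (d : ℕ) (c₁ c₂ : ℂ) :
    Submodule ℂ ((Fin d → Fin 2) → ℂ) :=
  LinearMap.ker (Matrix.toLin' (totalSpinSq d) - c₁ • LinearMap.id) ⊓
  LinearMap.ker (Matrix.toLin' (totalSpin d 2) - c₂ • LinearMap.id)

open Matrix in
/-- one-site operator acting by the matrix `M` on the factor `a` -/
noncomputable def siteOp (d : ℕ) (a : Fin d) (M : Matrix (Fin 2) (Fin 2) ℂ) :
    ((Fin d → Fin 2) → ℂ) →ₗ[ℂ] ((Fin d → Fin 2) → ℂ) where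
  toFun v := fun x => ∑ i : Fin 2, M (x a) i * v (Function.update x a i)
  map_add' v w := by
    funext x; simp [mul_add]; ring
  map_smul' c v := by
    funext x; simp; ring

theorem siteOp_apply (d : ℕ) (a : Fin d) (M : Matrix (Fin 2) (Fin 2) ℂ)
    (v : (Fin d → Fin 2) → ℂ) (x) :
    siteOp d a M v x = ∑ i : Fin 2, M (x a) i * v (Function.update x a i) := rfl

theorem siteOp_mul_same (d : ℕ) (a : Fin d) (M N : Matrix (Fin 2) (Fin 2) ℂ) :
    siteOp d a M * siteOp d a N = siteOp d a (M * N) := by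
  ext1 v
  ext x
  simp [siteOp_apply, Matrix.mul_apply, -LinearMap.toMatrix_mulVec_repr]
  ring

theorem siteOp_comm (d : ℕ) (a b : Fin d) (hab : a ≠ b) (M N : Matrix (Fin 2) (Fin 2) ℂ) :
    siteOp d a M * siteOp d b N = siteOp d b N * siteOp d a M := by
  ext1 v
  ext x
  simp only [LinearMap.coe_comp, Function.comp_apply, Module.End.mul_apply, siteOp_apply,
    Fin.sum_univ_two, Function.update_of_ne hab, Function.update_of_ne hab.symm,
    Function.update_comm hab]
  ring

theorem siteOp_add (d : ℕ) (a : Fin d) (M N : Matrix (Fin 2) (Fin 2) ℂ) :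
    siteOp d a (M + N) = siteOp d a M + siteOp d a N := by
  refine LinearMap.ext fun v => funext fun x => ?_
  simp [siteOp_apply]; ring

theorem siteOp_smul (d : ℕ) (a : Fin d) (c : ℂ) (M : Matrix (Fin 2) (Fin 2) ℂ) :
    siteOp d a (c • M) = c • siteOp d a M := by
  refine LinearMap.ext fun v => funext fun x => ?_
  simp [siteOp_apply]; ring

theorem siteOp_sub (d : ℕ) (a : Fin d) (M N : Matrix (Fin 2) (Fin 2) ℂ) :
    siteOp d a (M - N) = siteOp d a M - siteOp d a N := by
  refine LinearMap.ext fun v => funext fun x => ?_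
  simp [siteOp_apply]; ring

theorem toLin_spinOp (d : ℕ) (ℓ : Fin 3) (a : Fin d) :
    Matrix.toLin' (spinOp d ℓ a) = siteOp d a ((1 / 2 : ℂ) • pauli ℓ) := by
  refine LinearMap.ext fun v => funext fun x => ?_
  rw [Matrix.toLin'_apply, siteOp_apply, Matrix.mulVec, dotProduct]
  have hp : ∀ y : Fin d → Fin 2,
      (∏ b ∈ Finset.univ.erase a, (if x b = y b then (1:ℂ) else 0)) =
        if y = Function.update x a (y a) then 1 else 0 := by
    intro y
    rw [Finset.prod_ite_zero]
    congr 1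
    · simp only [Finset.prod_const_one, Finset.mem_erase, Finset.mem_univ, and_true, eq_iff_iff]
      rw [Function.eq_update_iff]
      constructor
      · intro h; exact ⟨rfl, fun b hb => (h b hb).symm⟩
      · intro h b hb; exact (h.2 b hb).symm
    · simp
  have : ∀ y : Fin d → Fin 2, spinOp d ℓ a x y * v y =
      ∑ i : Fin 2, if y = Function.update x a i then
        ((1 / 2 : ℂ) • pauli ℓ) (x a) i * v (Function.update x a i) else 0 := by
    intro y
    have h1 : ∀ i : Fin 2, (y = Function.update x a i) ↔
        (i = y a ∧ y = Function.update x a (y a)) := by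
      intro i
      constructor
      · intro h
        have : i = y a := by rw [h]; simp
        exact ⟨this, this ▸ h⟩
      · rintro ⟨rfl, h⟩; exact h
    simp only [spinOp, Matrix.of_apply, hp]
    rw [Finset.sum_eq_single (y a)]
    · by_cases h : y = Function.update x a (y a)
      · rw [if_pos h, if_pos h, ← h]; simp
      · rw [if_neg h, if_neg h]; simp
    · intro b _ hb
      rw [if_neg]
      intro h
      exact hb ((h1 b).1 h).1
    · simp
  simp only [this]
  rw [Finset.sum_comm]
  simp

/-- total operator -/
noncomputable def totOp (d : ℕ) (M : Matrix (Fin 2) (Fin 2) ℂ) :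
    ((Fin d → Fin 2) → ℂ) →ₗ[ℂ] ((Fin d → Fin 2) → ℂ) := ∑ a, siteOp d a M

theorem totOp_comm (d : ℕ) (M N : Matrix (Fin 2) (Fin 2) ℂ) :
    totOp d M * totOp d N - totOp d N * totOp d M = totOp d (M * N - N * M) := by
  unfold totOp
  simp only [Finset.sum_mul_sum, siteOp_sub, ← siteOp_mul_same]
  rw [Finset.sum_comm (f := fun a b => siteOp d a N * siteOp d b M), ← Finset.sum_sub_distrib]
  refine Finset.sum_congr rfl fun a _ => ?_
  rw [← Finset.sum_sub_distrib, Finset.sum_eq_single a]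
  · intro b _ hb
    rw [siteOp_comm d a b hb.symm, sub_self]
  · simp

theorem totOp_smul (d : ℕ) (c : ℂ) (M : Matrix (Fin 2) (Fin 2) ℂ) :
    totOp d (c • M) = c • totOp d M := by
  simp [totOp, siteOp_smul, Finset.smul_sum]

theorem totOp_add (d : ℕ) (M N : Matrix (Fin 2) (Fin 2) ℂ) :
    totOp d (M + N) = totOp d M + totOp d N := by
  simp [totOp, siteOp_add, Finset.sum_add_distrib]

theorem totOp_sub (d : ℕ) (M N : Matrix (Fin 2) (Fin 2) ℂ) :
    totOp d (M - N) = totOp d M - totOp d N := by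
  simp [totOp, siteOp_sub]

theorem toLin_totalSpin (d : ℕ) (ℓ : Fin 3) :
    Matrix.toLin' (totalSpin d ℓ) = totOp d ((1 / 2 : ℂ) • pauli ℓ) := by
  simp only [totalSpin, totOp, map_sum, toLin_spinOp]

theorem spinOp_herm (d : ℕ) (ℓ : Fin 3) (a : Fin d) : (spinOp d ℓ a).conjTranspose = spinOp d ℓ a := by
  ext x y
  have hp : ∀ i j, star (pauli ℓ i j) = pauli ℓ j i := by
    intro i j
    fin_cases ℓ <;> fin_cases i <;> fin_cases j <;> simp [pauli]
  simp only [Matrix.conjTranspose_apply, spinOp, Matrix.of_apply, star_mul', hp, star_prod]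
  congr 1
  · simp
  · refine Finset.prod_congr rfl fun b _ => ?_
    by_cases h : x b = y b
    · simp [h]
    · simp [h, Ne.symm h]

theorem totalSpin_herm (d : ℕ) (ℓ : Fin 3) : (totalSpin d ℓ).conjTranspose = totalSpin d ℓ := by
  simp [totalSpin, Matrix.conjTranspose_sum, spinOp_herm]

noncomputable def spE (d : ℕ) : Matrix (Fin d → Fin 2) (Fin d → Fin 2) ℂ :=
  totalSpin d 0 + Complex.I • totalSpin d 1

theorem spE_conj (d : ℕ) :
    (spE d).conjTranspose = totalSpin d 0 - Complex.I • totalSpin d 1 := by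
  simp [spE, Matrix.conjTranspose_add, Matrix.conjTranspose_smul, totalSpin_herm, sub_eq_add_neg]

theorem ts_comm (d : ℕ) (i j : Fin 3) (M) (h : ((1 / 2 : ℂ) • pauli i) * ((1 / 2 : ℂ) • pauli j) -
    ((1 / 2 : ℂ) • pauli j) * ((1 / 2 : ℂ) • pauli i) = M) :
    Matrix.toLin' (totalSpin d i * totalSpin d j - totalSpin d j * totalSpin d i) = totOp d M := by
  rw [map_sub, Matrix.toLin'_mul, Matrix.toLin'_mul, toLin_totalSpin, toLin_totalSpin]
  rw [← h]
  exact totOp_comm _ _ _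

theorem ts_comm01 (d : ℕ) : totalSpin d 0 * totalSpin d 1 - totalSpin d 1 * totalSpin d 0
    = Complex.I • totalSpin d 2 := by
  apply Matrix.toLin'.injective
  rw [ts_comm d 0 1 _ rfl, map_smul, toLin_totalSpin, ← totOp_smul]
  congr 1
  ext i j
  fin_cases i <;> fin_cases j <;> simp [pauli, Matrix.mul_apply] <;> ring_nf

theorem ts_comm20 (d : ℕ) : totalSpin d 2 * totalSpin d 0 - totalSpin d 0 * totalSpin d 2
    = Complex.I • totalSpin d 1 := by
  apply Matrix.toLin'.injective
  rw [ts_comm d 2 0 _ rfl, map_smul, toLin_totalSpin, ← totOp_smul]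
  congr 1
  ext i j
  fin_cases i <;> fin_cases j <;> simp [pauli, Matrix.mul_apply] <;> ring_nf <;> simp <;> norm_num

theorem ts_comm12 (d : ℕ) : totalSpin d 1 * totalSpin d 2 - totalSpin d 2 * totalSpin d 1
    = Complex.I • totalSpin d 0 := by
  apply Matrix.toLin'.injective
  rw [ts_comm d 1 2 _ rfl, map_smul, toLin_totalSpin, ← totOp_smul]
  congr 1
  ext i j
  fin_cases i <;> fin_cases j <;> simp [pauli, Matrix.mul_apply] <;> ring_nf

theorem sp_HE (d : ℕ) : totalSpin d 2 * spE d = spE d * totalSpin d 2 + spE d := by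
  have h1 := eq_add_of_sub_eq (ts_comm20 d)
  have h2 := (sub_eq_iff_eq_add'.1 (ts_comm12 d))
  simp only [spE, mul_add, add_mul, mul_smul_comm, smul_mul_assoc]
  rw [h1, h2, smul_add, smul_smul, Complex.I_mul_I]
  module

theorem sp_HF (d : ℕ) : totalSpin d 2 * (spE d).conjTranspose
    = (spE d).conjTranspose * totalSpin d 2 - (spE d).conjTranspose := by
  have h1 := eq_add_of_sub_eq (ts_comm20 d)
  have h2 := (sub_eq_iff_eq_add'.1 (ts_comm12 d))
  simp only [spE_conj, mul_sub, sub_mul, mul_smul_comm, smul_mul_assoc]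
  rw [h1, h2, smul_add, smul_smul, Complex.I_mul_I]
  module

theorem sp_EF (d : ℕ) : spE d * (spE d).conjTranspose
    = (spE d).conjTranspose * spE d + (2 : ℂ) • totalSpin d 2 := by
  have h1 := eq_add_of_sub_eq (ts_comm01 d)
  rw [spE_conj]
  simp only [spE, mul_sub, sub_mul, mul_add, add_mul, mul_smul_comm, smul_mul_assoc]
  rw [h1]
  simp only [smul_add, smul_sub, smul_smul, Complex.I_mul_I]
  module

theorem sp_sq (d : ℕ) : totalSpinSq d
    = (spE d).conjTranspose * spE d + totalSpin d 2 * totalSpin d 2 + totalSpin d 2 := by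
  have h1 := eq_add_of_sub_eq (ts_comm01 d)
  rw [spE_conj]
  simp only [totalSpinSq, Fin.sum_univ_three, spE, mul_sub, sub_mul, mul_add, add_mul, mul_smul_comm, smul_mul_assoc, smul_add, smul_sub, smul_smul, Complex.I_mul_I]
  rw [h1, smul_add, smul_smul, Complex.I_mul_I]
  module

theorem sp_H_apply (d : ℕ) (v : (Fin d → Fin 2) → ℂ) (x) :
    (totalSpin d 2).mulVec v x =
      ((d : ℂ) / 2 - (Finset.univ.filter fun a => x a = 1).card) * v x := by
  rw [← Matrix.toLin'_apply, toLin_totalSpin, totOp, LinearMap.sum_apply, Finset.sum_apply]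
  have : ∀ a, siteOp d a ((1 / 2 : ℂ) • pauli 2) v x = (1/2 - if x a = 1 then 1 else 0) * v x := by
    intro a
    rw [siteOp_apply]
    have hu : Function.update x a (x a) = x := by simp
    rcases (show x a = 0 ∨ x a = 1 by omega) with h | h <;> rw [h] at hu <;>
      simp [pauli, h, hu] <;> ring
  simp only [this, ← Finset.sum_mul, Finset.sum_sub_distrib]
  simp [div_eq_mul_inv]

theorem card_weight (d j : ℕ) :
    Fintype.card {x : Fin d → Fin 2 // (Finset.univ.filter fun a => x a = 1).card = j}
      = d.choose j := by
  have e : {x : Fin d → Fin 2 // (Finset.univ.filter fun a => x a = 1).card = j} ≃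
      {s : Finset (Fin d) // s.card = j} :=
    { toFun := fun x => ⟨Finset.univ.filter fun a => x.1 a = 1, x.2⟩
      invFun := fun s => ⟨fun a => if a ∈ s.1 then 1 else 0, by simpa using s.2⟩
      left_inv := by
        rintro ⟨x, hx⟩
        ext a
        rcases (show x a = 0 ∨ x a = 1 by omega) with h | h <;> simp [h]
      right_inv := by
        rintro ⟨s, hs⟩
        simp }
  rw [Fintype.card_congr e, Fintype.card_finset_len, Fintype.card_fin]

noncomputable def wt (d : ℕ) (c : ℂ) : Submodule ℂ ((Fin d → Fin 2) → ℂ) :=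
  LinearMap.ker (Matrix.toLin' (totalSpin d 2) - c • LinearMap.id)

theorem mem_wt (d : ℕ) (c : ℂ) (v) : v ∈ wt d c ↔ (totalSpin d 2).mulVec v = c • v := by
  simp [wt, sub_eq_zero]

theorem mem_wt' (d : ℕ) (t : ℂ) (v) : v ∈ wt d ((d : ℂ) / 2 - t) ↔
    ∀ x, ((Finset.univ.filter fun a => x a = 1).card : ℂ) ≠ t → v x = 0 := by
  rw [mem_wt, funext_iff]
  refine forall_congr' fun x => ?_
  rw [sp_H_apply, Pi.smul_apply, smul_eq_mul, ← sub_eq_zero, ← sub_mul, mul_eq_zero]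
  rw [or_iff_not_imp_left]
  refine imp_congr_left (not_congr ?_)
  constructor <;> intro h <;> linear_combination -h

open Classical in
theorem finrank_wt (d : ℕ) (t : ℂ) : Module.finrank ℂ (wt d ((d : ℂ) / 2 - t)) =
    Fintype.card {x : Fin d → Fin 2 // ((Finset.univ.filter fun a => x a = 1).card : ℂ) = t} := by
  have e : wt d ((d : ℂ) / 2 - t) ≃ₗ[ℂ]
      ({x : Fin d → Fin 2 // ((Finset.univ.filter fun a => x a = 1).card : ℂ) = t} → ℂ) :=
    { toFun := fun v x => v.1 x.1
      map_add' := fun _ _ => rfl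
      map_smul' := fun _ _ => rfl
      invFun := fun w => ⟨fun x => if h : _ = t then w ⟨x, h⟩ else 0, by
        rw [mem_wt']
        intro x hx
        exact dif_neg hx⟩
      left_inv := by
        rintro ⟨v, hv⟩
        rw [mem_wt'] at hv
        ext x
        by_cases h : ((Finset.univ.filter fun a => x a = 1).card : ℂ) = t
        · simp [h]
        · simp [h, hv x h]
      right_inv := by
        intro w
        ext x
        simp [x.2] }
  rw [e.finrank_eq, Module.finrank_fintype_fun_eq_card]

theorem finrank_wt_nat (d j : ℕ) : Module.finrank ℂ (wt d ((d : ℂ) / 2 - j)) = d.choose j := by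
  classical
  rw [finrank_wt, ← card_weight]
  simp only [Nat.cast_inj]

theorem finrank_wt_pred (d k : ℕ) : Module.finrank ℂ (wt d ((d : ℂ) / 2 - (k - 1))) =
    if k = 0 then 0 else d.choose (k - 1) := by
  classical
  cases k with
  | zero =>
    rw [finrank_wt, if_pos rfl, Fintype.card_eq_zero_iff]
    refine ⟨fun ⟨x, hx⟩ => ?_⟩
    have : (((Finset.univ.filter fun a => x a = 1).card + 1 : ℕ) : ℂ) = 0 := by
      push_cast; rw [hx]; simp
    exact absurd (Nat.cast_eq_zero.1 this) (by simp)
  | succ k =>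
    have := finrank_wt_nat d k
    have hk : ((k + 1 : ℕ) : ℂ) - 1 = k := by push_cast; ring
    rw [hk, this]
    simp

open scoped ComplexOrder in
theorem sp_pos (d : ℕ) (c : ℝ) (hc : 0 < c) (v)
    (h : ((spE d).conjTranspose * spE d).mulVec v + (c : ℂ) • v = 0) : v = 0 := by
  have h1 := (Matrix.posSemidef_conjTranspose_mul_self (spE d)).dotProduct_mulVec_nonneg v
  have h2 : ((spE d).conjTranspose * spE d).mulVec v = -((c : ℂ) • v) := eq_neg_of_add_eq_zero_left h
  rw [h2, dotProduct_neg, dotProduct_smul, smul_eq_mul] at h1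
  have h3 : 0 ≤ star v ⬝ᵥ v := dotProduct_star_self_nonneg v
  have h4 : star v ⬝ᵥ v = 0 := by
    refine le_antisymm ?_ h3
    rw [Complex.le_def] at h1 h3 ⊢
    simp at h1 h3 ⊢
    refine ⟨by nlinarith [h1.1], h3.2.symm⟩
  exact dotProduct_star_self_eq_zero.1 h4

theorem E_wt (d : ℕ) (c c' : ℂ) (hc : c' = c + 1) (v) (hv : v ∈ wt d c) :
    (spE d).mulVec v ∈ wt d c' := by
  rw [mem_wt] at *
  rw [Matrix.mulVec_mulVec, sp_HE, Matrix.add_mulVec, ← Matrix.mulVec_mulVec, hv,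
    Matrix.mulVec_smul, hc]
  module

theorem F_wt (d : ℕ) (c c' : ℂ) (hc : c' = c - 1) (v) (hv : v ∈ wt d c) :
    (spE d).conjTranspose.mulVec v ∈ wt d c' := by
  rw [mem_wt] at *
  rw [Matrix.mulVec_mulVec, sp_HF, Matrix.sub_mulVec, ← Matrix.mulVec_mulVec, hv,
    Matrix.mulVec_smul, hc]
  module

theorem EF_wt (d : ℕ) (c : ℂ) (v) (hv : v ∈ wt d c) :
    (spE d).mulVec ((spE d).conjTranspose.mulVec v) =
      (spE d).conjTranspose.mulVec ((spE d).mulVec v) + (2 * c) • v := by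
  rw [mem_wt] at hv
  rw [Matrix.mulVec_mulVec, sp_EF, Matrix.add_mulVec, Matrix.smul_mulVec, hv,
    Matrix.mulVec_mulVec, smul_smul]

theorem mem_spinEigenspace (d : ℕ) (c₁ c₂ : ℂ) (v) : v ∈ spinEigenspace d c₁ c₂ ↔
    v ∈ wt d c₂ ∧ (spE d).conjTranspose.mulVec ((spE d).mulVec v) = (c₁ - c₂ ^ 2 - c₂) • v := by
  have : v ∈ spinEigenspace d c₁ c₂ ↔ v ∈ wt d c₂ ∧ (totalSpinSq d).mulVec v = c₁ • v := by
    simp [spinEigenspace, wt, sub_eq_zero, and_comm]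
  rw [this]
  refine and_congr_right fun h => ?_
  rw [mem_wt] at h
  rw [sp_sq, Matrix.add_mulVec, Matrix.add_mulVec, ← Matrix.mulVec_mulVec, ← Matrix.mulVec_mulVec,
    h, Matrix.mulVec_smul, h]
  constructor
  · intro h'
    rw [sub_smul, sub_smul, ← h']
    module
  · intro h'
    rw [h']
    module

open scoped ComplexOrder in
theorem base_dim (d k : ℕ) (hk : 2 * k ≤ d) (c₁ : ℂ)
    (hc : c₁ = ((d : ℂ) / 2 - k) ^ 2 + ((d : ℂ) / 2 - k)) :
    Module.finrank ℂ (spinEigenspace d c₁ ((d : ℂ) / 2 - k)) =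
      d.choose k - (if k = 0 then 0 else d.choose (k - 1)) := by
  let f : wt d ((d : ℂ) / 2 - k) →ₗ[ℂ] wt d ((d : ℂ) / 2 - (k - 1)) :=
    (Matrix.toLin' (spE d)).restrict (fun v hv => E_wt d _ _ (by ring) v hv)
  let g : wt d ((d : ℂ) / 2 - (k - 1)) →ₗ[ℂ] wt d ((d : ℂ) / 2 - k) :=
    (Matrix.toLin' (spE d).conjTranspose).restrict (fun v hv => F_wt d _ _ (by ring) v hv)
  have hinj : Function.Injective (f ∘ₗ g) := by
    rw [injective_iff_map_eq_zero]
    rintro ⟨v, hv⟩ h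
    have h' : (spE d).mulVec ((spE d).conjTranspose.mulVec v) = 0 := congrArg Subtype.val h
    rw [EF_wt d _ v hv, Matrix.mulVec_mulVec] at h'
    have := sp_pos d ((d : ℝ) - 2 * k + 2) (by
      have : (2 * k : ℝ) ≤ d := by exact_mod_cast hk
      linarith) v (by rw [← h']; congr 2; push_cast; ring)
    exact Subtype.ext this
  have hsurj : Function.Surjective f := by
    have := LinearMap.injective_iff_surjective.1 hinj
    exact Function.Surjective.of_comp (g := g) this
  have hrn := LinearMap.finrank_range_add_finrank_ker f
  rw [LinearMap.range_eq_top.2 hsurj, finrank_top, finrank_wt_nat, finrank_wt_pred] at hrn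
  have hker : Module.finrank ℂ (LinearMap.ker f) =
      Module.finrank ℂ (spinEigenspace d c₁ ((d : ℂ) / 2 - k)) := by
    have hmap : (LinearMap.ker f).map (wt d ((d : ℂ) / 2 - k)).subtype =
        spinEigenspace d c₁ ((d : ℂ) / 2 - k) := by
      ext v
      rw [mem_spinEigenspace, hc]
      have hz : ((d : ℂ) / 2 - k) ^ 2 + ((d : ℂ) / 2 - k) - ((d : ℂ) / 2 - k) ^ 2
          - ((d : ℂ) / 2 - k) = 0 := by ring
      rw [hz, zero_smul, Matrix.mulVec_mulVec, Matrix.conjTranspose_mul_self_mulVec_eq_zero]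
      constructor
      · rintro ⟨⟨w, hw⟩, hw0, rfl⟩
        exact ⟨hw, congrArg Subtype.val hw0⟩
      · rintro ⟨hw, h0⟩
        exact ⟨⟨v, hw⟩, Subtype.ext h0, rfl⟩
    rw [← hmap]
    exact (Submodule.finrank_map_subtype_eq _ _).symm
  omega

theorem step_dim (d k r : ℕ) (hk : 2 * k ≤ d) (hr : r + 1 ≤ d - 2 * k) (c₁ : ℂ)
    (hc : c₁ = ((d : ℂ) / 2 - k) ^ 2 + ((d : ℂ) / 2 - k)) :
    Module.finrank ℂ (spinEigenspace d c₁ ((d : ℂ) / 2 - k - (r + 1 : ℕ))) =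
      Module.finrank ℂ (spinEigenspace d c₁ ((d : ℂ) / 2 - k - r)) := by
  have hne : ((r : ℂ) + 1) * (d - 2 * k - r) ≠ 0 := by
    obtain ⟨n, rfl⟩ : ∃ n, d = 2 * k + (r + 1) + n := ⟨d - (2 * k + (r + 1)), by omega⟩
    have : ((r : ℂ) + 1) * (((2 * k + (r + 1) + n : ℕ) : ℂ) - 2 * k - r)
        = (((r + 1) * (n + 1) : ℕ) : ℂ) := by push_cast; ring
    rw [this, Nat.cast_ne_zero]
    positivity
  have hEF : ∀ v ∈ spinEigenspace d c₁ ((d : ℂ) / 2 - k - r),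
      (spE d).mulVec ((spE d).conjTranspose.mulVec v) = (((r : ℂ) + 1) * (d - 2 * k - r)) • v := by
    intro v hv
    rw [mem_spinEigenspace] at hv
    rw [EF_wt d _ v hv.1, hv.2, ← add_smul, hc]
    congr 1
    ring
  have hFE : ∀ v ∈ spinEigenspace d c₁ ((d : ℂ) / 2 - k - (r + 1 : ℕ)),
      (spE d).conjTranspose.mulVec ((spE d).mulVec v) = (((r : ℂ) + 1) * (d - 2 * k - r)) • v := by
    intro v hv
    rw [mem_spinEigenspace] at hv
    rw [hv.2, hc]
    congr 1
    push_cast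
    ring
  have hE : ∀ v ∈ spinEigenspace d c₁ ((d : ℂ) / 2 - k - (r + 1 : ℕ)),
      Matrix.toLin' (spE d) v ∈ spinEigenspace d c₁ ((d : ℂ) / 2 - k - r) := by
    intro v hv
    have h2 := hFE v hv
    rw [mem_spinEigenspace] at hv ⊢
    rw [Matrix.toLin'_apply]
    have hw := E_wt d _ ((d : ℂ) / 2 - k - r) (by push_cast; ring) v hv.1
    refine ⟨hw, ?_⟩
    have h3 := EF_wt d _ _ hw
    rw [h2, Matrix.mulVec_smul] at h3
    rw [← sub_eq_iff_eq_add] at h3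
    rw [← h3, ← sub_smul, hc]
    congr 1
    ring
  have hF : ∀ v ∈ spinEigenspace d c₁ ((d : ℂ) / 2 - k - r),
      Matrix.toLin' (spE d).conjTranspose v ∈
        spinEigenspace d c₁ ((d : ℂ) / 2 - k - (r + 1 : ℕ)) := by
    intro v hv
    have h2 := hEF v hv
    rw [mem_spinEigenspace] at hv ⊢
    rw [Matrix.toLin'_apply]
    refine ⟨F_wt d _ _ (by push_cast; ring) v hv.1, ?_⟩
    rw [h2, Matrix.mulVec_smul, hc]
    congr 1
    push_cast
    ring
  refine le_antisymm ?_ ?_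
  · refine LinearMap.finrank_le_finrank_of_injective (f := (Matrix.toLin' (spE d)).restrict hE) ?_
    rw [injective_iff_map_eq_zero]
    rintro ⟨v, hv⟩ h
    have h' : (spE d).mulVec v = 0 := congrArg Subtype.val h
    have := hFE v hv
    rw [h', Matrix.mulVec_zero] at this
    exact Subtype.ext ((smul_eq_zero.1 this.symm).resolve_left hne)
  · refine LinearMap.finrank_le_finrank_of_injective
      (f := (Matrix.toLin' (spE d).conjTranspose).restrict hF) ?_
    rw [injective_iff_map_eq_zero]
    rintro ⟨v, hv⟩ h
    have h' : (spE d).conjTranspose.mulVec v = 0 := congrArg Subtype.val h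
    have := hEF v hv
    rw [h', Matrix.mulVec_zero] at this
    exact Subtype.ext ((smul_eq_zero.1 this.symm).resolve_left hne)

theorem all_dim (d k r : ℕ) (hk : 2 * k ≤ d) (hr : r ≤ d - 2 * k) (c₁ : ℂ)
    (hc : c₁ = ((d : ℂ) / 2 - k) ^ 2 + ((d : ℂ) / 2 - k)) :
    Module.finrank ℂ (spinEigenspace d c₁ ((d : ℂ) / 2 - k - r)) =
      d.choose k - (if k = 0 then 0 else d.choose (k - 1)) := by
  induction r with
  | zero =>
    rw [Nat.cast_zero, sub_zero]
    exact base_dim d k hk c₁ hc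
  | succ r ih => rw [step_dim d k r hk hr c₁ hc, ih (by omega)]

/-- **Catalan-triangle dimension formula**: for `d ≥ 1`, integers `k, r` with `0 ≤ 2k ≤ d`,
`0 ≤ r ≤ d − 2k`, set `l = (d − 2k)/2` and `m = l − r`.  Then
`dim V_{l(l+1), m} = C(d,k) − C(d,k−1)` (with `C(d,−1) = 0`). -/
theorem spinEigenspace_dim (d k r : ℕ) (hd : 1 ≤ d) (hk : 2 * k ≤ d) (hr : r ≤ d - 2 * k) :
    Module.finrank ℂ
      (spinEigenspace d
        ((((d : ℂ) - 2 * k) / 2) * ((((d : ℂ) - 2 * k) / 2) + 1))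
        ((((d : ℂ) - 2 * k) / 2) - r))
    = d.choose k - (if k = 0 then 0 else d.choose (k - 1)) := by
  have h := all_dim d k r hk hr
    ((((d : ℂ) - 2 * k) / 2) * ((((d : ℂ) - 2 * k) / 2) + 1)) (by ring)
  have h2 : (((d : ℂ) - 2 * k) / 2) - r = (d : ℂ) / 2 - k - r := by ring
  rw [h2]
  exact h
end
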